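/- arXiv:1207.0724 — 2 statements merged into one kernel-verified Lean document; each statement's English description precedes it below -/
import Mathlib

section
/- Let A, B ∈ M₇(ℚ) be the matrices A = (1/2)·[[0,1,−1,0,0,1,−1],[0,−1,0,−1,−1,1,0],[0,−1,0,1,1,1,0],[0,1,1,0,0,1,1],[−2,0,0,0,0,0,0],[0,0,1,1,−1,0,−1],[0,0,−1,1,−1,0,1]] and B = [[0,0,0,0,0,−1,0],[0,1,0,0,0,0,0],[0,0,1,0,0,0,0],[0,0,0,0,0,0,1],[0,0,0,0,1,0,0],[1,0,0,0,0,0,0],[0,0,0,−1,0,0,0]]. Then A and B are invertible, the subgroup Γ of GL₇(ℚ) generated by A and B is finite of order 12096, and in ℚ[X] one has ∑_{g ∈ Γ} det(X·I₇ − g) = 12096·(X⁷ − X⁴ + X³ − 1). -/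
open Polynomial

noncomputable section

/-- The first generator (one half of an integral matrix). -/
def matA : Matrix (Fin 7) (Fin 7) ℚ :=
  (1 / 2 : ℚ) •
    !![0, 1, -1, 0, 0, 1, -1;
       0, -1, 0, -1, -1, 1, 0;
       0, -1, 0, 1, 1, 1, 0;
       0, 1, 1, 0, 0, 1, 1;
       -2, 0, 0, 0, 0, 0, 0;
       0, 0, 1, 1, -1, 0, -1;
       0, 0, -1, 1, -1, 0, 1]

/-- The second generator. -/
def matB : Matrix (Fin 7) (Fin 7) ℚ :=
  !![0, 0, 0, 0, 0, -1, 0;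
     0, 1, 0, 0, 0, 0, 0;
     0, 0, 1, 0, 0, 0, 0;
     0, 0, 0, 0, 0, 0, 1;
     0, 0, 0, 0, 1, 0, 0;
     1, 0, 0, 0, 0, 0, 0;
     0, 0, 0, -1, 0, 0, 0]

def mA : Matrix (Fin 7) (Fin 7) ℤ :=
  !![0, 1, -1, 0, 0, 1, -1;
     0, -1, 0, -1, -1, 1, 0;
     0, -1, 0, 1, 1, 1, 0;
     0, 1, 1, 0, 0, 1, 1;
     -2, 0, 0, 0, 0, 0, 0;
     0, 0, 1, 1, -1, 0, -1;
     0, 0, -1, 1, -1, 0, 1]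

def mB : Matrix (Fin 7) (Fin 7) ℤ :=
  !![0, 0, 0, 0, 0, -2, 0;
     0, 2, 0, 0, 0, 0, 0;
     0, 0, 2, 0, 0, 0, 0;
     0, 0, 0, 0, 0, 0, 2;
     0, 0, 0, 0, 2, 0, 0;
     2, 0, 0, 0, 0, 0, 0;
     0, 0, 0, -2, 0, 0, 0]

/-- The 126 roots (doubled), packed with three bits per coordinate. -/
def rootTab : ℕ :=
  0x124db6922db69a4d94d26da29365149b4932da4896d369a68b4d34ca69a2534db4d265a69365349929a4db45265a29365149928a4d368a68b4534ca29a2514d24d96922cb69a4594d22da29165148b49325a4892db49b45a4da6526d12936936d348b69a4cb4d225a69365348b29a4c94d224a69b48b45a45a6522d129169a6da4536d268b69145b49a65a4532d268969144b49a6ca45365268b29145949a64a45325268929144949b49945a4ca6526512932936d148b68a4cb45225a29365148b28a4c945224a29b48945a44a6522512912924db2922d969a4c94d265a2932514994932ca48965369a28b4d14ca68a25345b4d225a69165348929a45b45225a29165148928a45368a28b4514ca28a2514524d92922c969a4494d225a29125148949324a4892424925124924124928924920924944924904924a2492482492512492412492892492092494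

def pATab : ℕ :=
  0x1bc26d821e7c39a510ae5e5f322ceb782cfb932f2fd1a845194d38f483701ec3283e2c772eee177805f78abc4228f0d4f41de419b45ea9fd96dc0270214ba76d1a049adfc361dcc4718a2e9c7a2612b2666f526d6c7a3103a34f7052aa49215d5935361f1df68ba9cf75a0597c409

def pBTab : ℕ :=
  0x2e5db356bd3a1452f547cd01ce1b109de3b4ce92f9de3d72d5bb360c56acfbf157a51e15fb53e53a6efda648951a6c9971e24084fa2c186fca94cb9096221809e3238478ebf7ad5bb152b529d3d27445c8f1adda8f9bdfacc682d99d3b70d1b325cbc38600044881834284060858a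

/-- The collinearity relation on the roots. -/
def nTab : ℕ :=
  0xa0100084108210008050000000000004088020088011004011020000000000800440401000008020220010000c002000010800024024000108000040c0004000020400002640000204000020c00002001020802000004010408004000c0000410082010100080804100820000000012000110400090002088000480000001008000401200900480200010080000004100022040006000204400082000000800040080411000882010020001000000802004101020004080820040100000004040101800000000018080202003000010204000000861000000204080000c0020048000000492000000120040000c100200004001800018002000040083000005010000002108400000080a00000c00800820240000000002404100100300200010008002400024001000800043000008820000001204800000041100000c20000402000882041100040200004000010020200a00010800050040400800001000800402004402200402001000800008010010040808010102008008010000020011000600020400060008800400000402004008080402010100200402000010800001000018018000080000108c00080400801000400020008010020100c0011002002000800010004004008800c020400008000001980000010000204c00040808000042200044200001010200000220400000110060088000002044000000901002000404020200040080900000004600040100020400080200062000000102011000201000804000880408000008001060008000900010006080010000100001a000400000002000580000b0000000000010060a050600800000000003000000000420a090504200000000000300580000820000000004100001a030000000000008805060a01100000000000300a400004008000001002000025030002000025000100000008000a400007000000000002101050a0808400000000003012008008100080100081001004800000808400040040108020020002101000010004202008020004010040420008000200008840020006000400211000040000404200080808000101010004202000000880408082000000041010201100000100100480102000004080120080080000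40080902004000002004090100200000200062011000000000880460004000020002101000500000a000808400040000060800104800000001208001060000002110000402040002040200008840000021100004020400020402000088400000060800104800000001208001060000020002101000500000a00080840004000020006201100000000088046000400000400809020040000020040901002000010010048010200000408012008008000008804080820000000410102011000000404200080808000101010004202000020000884002000600040021100004000100042020080200040100404200080000808400040040108020020002101000001200800810008010008100100480000000000002101050a08084000000000032000025000100000008000a40000700000a400004008000001002000025030000000000008805060a01100000000000300580000820000000004100001a03000000000000420a09050420000000000030000000010060a050600800000000003100001a000400000002000580000b00008001060008000900010006080010000010201100020100080400088040800000046000401000204000802000620000000901002000404020200040080900000022040000011006008800000204400000408080000422000442000010102000020400008000001980000010000204c00011002002000800010004004008800c0080400801000400020008010020100c010800001000018018000080000108c0004020040080804020101002004020000020011000600020400060008800400000801001004080801010200800801000010008004020044022004020010008000010020200a0001080005004040080000200004020008820411000402000040000008820000001204800000041100000c20001000800240002400100080004300008008202400000000024041001003000005010000002108400000080a00000c100200004001800018002000040083000020048000000492000000120040000c0010204000000861000000204080000c0040401018000000000180802020030000802004101020004080820040100000080004008041100088201002000100000041000220400060002044000820000001008000401200900480200010080000001200011040009000208800048000000004100820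1010008080410082000000002001020802000004010408004000c004000020400002640000204000020c0002000010800024024000108000040c00000800440401000008020220010000c00000408802008801100401102000000000000a01000841082100080500000000000000000258000001a4000000000033000000000258000001a4000000000033060000090000000000000900000600f0060000090000000000000900000600f0000258000000000000000001a400003c000258000000000000000001a400003c09000006000000000000060000090c3009000006000000000000060000090c3000000000000000000000000000003fcf00000000000000000000000000003fcf0001a4000000000000000002580003300001a4000000000000000002580003300000000001a4000002580000000030300000000001a400000258000000003030

def tL : List ℕ := [123, 62, 1823, 1883, 1, 1943, 511, 234, 125, 247, 31, 53, 468, 117, 107, 438, 113, 891, 57, 934, 118, 465, 25, 200, 859, 980, 6, 429, 506, 470, 233, 940, 3, 108, 487, 421, 28, 14, 122, 121, 419, 905, 237, 454, 252, 510, 431, 214, 856, 219, 226, 911, 114, 467, 861, 127, 909, 486, 251, 105, 59, 418, 55, 110, 13, 26, 440, 220, 104, 52, 30, 60, 58, 116, 15, 49, 29, 232, 242, 244, 61, 222, 971, 436, 215, 227, 109, 402, 941, 860, 1020, 504, 126, 255, 485, 428, 2027, 452, 475, 243, 209, 210, 50, 100, 245, 490, 27, 12, 235, 54, 455, 445, 253,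 24, 981, 507, 56, 7, 111, 488, 218, 201, 1013, 430, 2040, 63]

def sL : List ℕ := [1, 4, 973, 2509, 1485, 913, 2043, 5115, 2, 8, 1826, 3067]

def rL : List ℕ := [1, 26525, 55473, 62650, 127526, 1425, 13674, 16039]

def dL : List ℕ := [4, 16242, 14001, 30617, 26525, 57965, 53047]

def invTab : ℕ :=
  0x134034612c03292280008e000000a02d002b44000000001400000003e00000337c01b2e03880bc0000001b4000000007a00e407876dc0006a000006714000010c680820005c7e0000000027001e00002008400e018c0003b84000000156e0001400fa03500060007c00f4000000004c5e0004a0032400000235800000560002a50260290022000000000f00000002d0068074e001672000006c0000000ee000000001d7600c4004000004400005c2b20205bae01f5500000530000000000122000011620000e60ea00027e6000680001366f600000f20003c00000000c0170800000000000009ba00380000004f00009000000825ca000230000c640000b2bde00029d20006bce00000000003800000b6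

section helpers

open Matrix

def pA (i : ℕ) : ℕ := (pATab >>> (7 * i)) % 128
def pB (i : ℕ) : ℕ := (pBTab >>> (7 * i)) % 128
def rt (i j : ℕ) : ℤ := (((rootTab >>> (3 * (7 * i + j))) % 8 : ℕ) : ℤ) - 2
def nn (x y : ℕ) : Bool := Nat.beq ((nTab >>> (128 * x + y)) % 2) 1

def rho (i : ℕ) : Fin 7 → ℚ := fun j => (rt i j : ℚ) / 2

/-- Decode a word in the generators from its binary code. -/
def dec : ℕ → ℕ → List Bool
  | 0, _ => []
  | f + 1, n => if n ≤ 1 then [] else Nat.beq (n % 2) 1 :: dec f (n / 2)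

def permW : List Bool → ℕ → ℕ
  | [], i => i
  | b :: w, i => bif b then pA (permW w i) else pB (permW w i)

def signs : Matrix (Fin 7) (Fin 7) ℤ :=
  !![-1, 1, 1, -1, 1, -1, -1;
     1, 1, -1, 1, -1, -1, -1;
     -1, 1, -1, -1, -1, 1, 1;
     -1, -1, 1, 1, -1, 1, -1;
     1, -1, 1, -1, -1, -1, 1;
     1, -1, -1, -1, 1, 1, -1;
     -1, -1, -1, 1, 1, -1, 1]

theorem chkA : ∀ i < 126, pA i < 126 ∧ ∀ j : Fin 7,
    mA j 0 * rt i 0 + mA j 1 * rt i 1 + mA j 2 * rt i 2 + mA j 3 * rt i 3 + mA j 4 * rt i 4 +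
      mA j 5 * rt i 5 + mA j 6 * rt i 6 = 2 * rt (pA i) j := by
  decide +kernel

theorem chkB : ∀ i < 126, pB i < 126 ∧ ∀ j : Fin 7,
    mB j 0 * rt i 0 + mB j 1 * rt i 1 + mB j 2 * rt i 2 + mB j 3 * rt i 3 + mB j 4 * rt i 4 +
      mB j 5 * rt i 5 + mB j 6 * rt i 6 = 2 * rt (pB i) j := by
  decide +kernel

theorem chkN : ∀ x < 126, ∀ y < 126, nn x y = true →
    nn (pA x) (pA y) = true ∧ nn (pB x) (pB y) = true := by
  decide +kernel

theorem chkT : (tL.map fun n => permW (dec 20 n) 4) = List.range 126 := by decide +kernel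

def yL : List ℕ := [0, 1, 2, 3, 6, 7, 8, 9, 10, 11, 12, 13]
def zL : List ℕ := [2, 3, 6, 7, 8, 9, 10, 11]

theorem chkS : (sL.map fun n => (permW (dec 20 n) 4, permW (dec 20 n) 0)) =
    yL.map fun y => (4, y) := by decide +kernel

theorem chkR : (rL.map fun n =>
      (permW (dec 20 n) 4, permW (dec 20 n) 0, permW (dec 20 n) 2)) =
    zL.map fun z => (4, 0, z) := by decide +kernel

theorem chkY : ∀ y < 126, nn 4 y = true → y ∈ yL := by decide +kernel

theorem chkD : ∀ k i : Fin 7, permW (dec 20 (dL.getD k 0)) (2 * i) =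
    if signs k i = 1 then 2 * (i : ℕ) else 2 * (i : ℕ) + 1 := by decide +kernel

theorem signs_pm : ∀ k i : Fin 7, signs k i = 1 ∨ signs k i = -1 := by
  intro k i
  fin_cases k <;> fin_cases i <;> simp [signs]

theorem chkOA : ∀ j : Fin 7, permW (List.replicate 12 true) (2 * j) = 2 * j := by decide +kernel
theorem chkOB : ∀ j : Fin 7, permW (List.replicate 4 false) (2 * j) = 2 * j := by decide +kernel

theorem chkE : ∀ i j : Fin 7, rt (2 * i) j = (if j = i then 2 else 0) ∧
    rt (2 * i + 1) j = (if j = i then -2 else 0) := by decide +kernel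

def hsh (i : ℕ) : ℤ := 803 * (rt i 0 + 2) + 1639 * (rt i 1 + 2) + 656 * (rt i 2 + 2) +
  2647 * (rt i 3 + 2) + 624 * (rt i 4 + 2) + 125 * (rt i 5 + 2) + 63 * (rt i 6 + 2)

theorem chkH : ∀ i < 126, (invTab >>> (7 * (hsh i % 311).toNat)) % 128 = i := by
  decide +kernel

theorem rt_inj (x : ℕ) (hx : x < 126) (y : ℕ) (hy : y < 126)
    (h : ∀ j : Fin 7, rt x j = rt y j) : x = y := by
  have e : hsh x = hsh y := by
    have h0 := h 0
    have h1 := h 1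
    have h2 := h 2
    have h3 := h 3
    have h4 := h 4
    have h5 := h 5
    have h6 := h 6
    simp only [Fin.isValue, Fin.coe_ofNat_eq_mod, Nat.reduceMod] at h0 h1 h2 h3 h4 h5 h6
    simp only [hsh, h0, h1, h2, h3, h4, h5, h6]
  rw [← chkH x hx, ← chkH y hy, e]

theorem matA_eq : matA = (1 / 2 : ℚ) • mA.map (Int.cast : ℤ → ℚ) := by
  ext i j
  fin_cases i <;> fin_cases j <;> simp [matA, mA]

theorem matB_eq : matB = (1 / 2 : ℚ) • mB.map (Int.cast : ℤ → ℚ) := by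
  ext i j
  fin_cases i <;> fin_cases j <;> simp [matB, mB]

theorem rho_even (i : Fin 7) : rho (2 * i) = Pi.single i 1 := by
  ext j
  simp only [rho, (chkE i j).1, Pi.single_apply]
  split_ifs <;> norm_num

theorem rho_odd (i : Fin 7) : rho (2 * i + 1) = -Pi.single i 1 := by
  ext j
  simp only [rho, (chkE i j).2, Pi.single_apply, Pi.neg_apply]
  split_ifs <;> norm_num

theorem rho_inj {x y : ℕ} (hx : x < 126) (hy : y < 126) (h : rho x = rho y) : x = y := by
  refine rt_inj x hx y hy fun j => ?_
  have := congrFun h j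
  simp only [rho] at this
  have h2 : (rt x j : ℚ) = rt y j := by linarith
  exact_mod_cast h2

theorem gen_rho (M : Matrix (Fin 7) (Fin 7) ℤ) (i k : ℕ) (h : ∀ j : Fin 7,
    M j 0 * rt i 0 + M j 1 * rt i 1 + M j 2 * rt i 2 + M j 3 * rt i 3 + M j 4 * rt i 4 +
      M j 5 * rt i 5 + M j 6 * rt i 6 = 2 * rt k j) :
    ((1 / 2 : ℚ) • M.map (Int.cast : ℤ → ℚ)) *ᵥ rho i = rho k := by
  ext j
  have := congrArg (Int.cast : ℤ → ℚ) (h j)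
  push_cast at this
  simp only [Matrix.mulVec, dotProduct, Matrix.smul_apply, Matrix.map_apply, smul_eq_mul,
    Fin.sum_univ_seven, rho]
  norm_num
  linarith

theorem matA_rho (i : ℕ) (hi : i < 126) : matA *ᵥ rho i = rho (pA i) := by
  rw [matA_eq]; exact gen_rho mA i _ (chkA i hi).2

theorem matB_rho (i : ℕ) (hi : i < 126) : matB *ᵥ rho i = rho (pB i) := by
  rw [matB_eq]; exact gen_rho mB i _ (chkB i hi).2

theorem det_matA : matA.det = 1 := by
  rw [matA, Matrix.det_smul]
  eval_det
  norm_num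

theorem det_matB : matB.det = 1 := by
  rw [matB]
  eval_det

abbrev GL7 := (Matrix (Fin 7) (Fin 7) ℚ)ˣ

def evW (uA uB : GL7) : List Bool → GL7
  | [] => 1
  | b :: w => (bif b then uA else uB) * evW uA uB w

theorem evW_append (uA uB : GL7) (v w : List Bool) :
    evW uA uB (v ++ w) = evW uA uB v * evW uA uB w := by
  induction v with
  | nil => simp [evW]
  | cons b v ih => simp [evW, ih, mul_assoc]

theorem evW_mem (uA uB : GL7) (w : List Bool) :
    evW uA uB w ∈ Subgroup.closure ({uA, uB} : Set GL7) := by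
  induction w with
  | nil => exact one_mem _
  | cons b w ih =>
    refine mul_mem (Subgroup.subset_closure ?_) ih
    cases b <;> simp

theorem permW_lt (w : List Bool) (i : ℕ) (hi : i < 126) : permW w i < 126 := by
  induction w with
  | nil => exact hi
  | cons b w ih =>
    cases b
    · exact (chkB _ ih).1
    · exact (chkA _ ih).1

theorem permW_nn (w : List Bool) (x y : ℕ) (hx : x < 126) (hy : y < 126) (h : nn x y = true) :
    nn (permW w x) (permW w y) = true := by
  induction w with
  | nil => exact h
  | cons b w ih =>
    have := chkN _ (permW_lt w x hx) _ (permW_lt w y hy) ih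
    cases b
    · exact this.2
    · exact this.1

section
variable (uA uB : GL7)

theorem evW_rho (hA : (uA : Matrix (Fin 7) (Fin 7) ℚ) = matA)
    (hB : (uB : Matrix (Fin 7) (Fin 7) ℚ) = matB) (w : List Bool) (i : ℕ) (hi : i < 126) :
    (evW uA uB w : Matrix (Fin 7) (Fin 7) ℚ) *ᵥ rho i = rho (permW w i) := by
  induction w with
  | nil => simp [evW, permW]
  | cons b w ih =>
    cases b
    · simp only [evW, permW, cond_false, Units.val_mul, ← Matrix.mulVec_mulVec, ih, hB]
      exact matB_rho _ (permW_lt w i hi)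
    · simp only [evW, permW, cond_true, Units.val_mul, ← Matrix.mulVec_mulVec, ih, hA]
      exact matA_rho _ (permW_lt w i hi)

theorem mat_ext {g h : Matrix (Fin 7) (Fin 7) ℚ}
    (e : ∀ j : Fin 7, g *ᵥ rho (2 * j) = h *ᵥ rho (2 * j)) : g = h := by
  ext i j
  have := congrFun (e j) i
  simpa [rho_even] using this

theorem evW_one (hA : (uA : Matrix (Fin 7) (Fin 7) ℚ) = matA)
    (hB : (uB : Matrix (Fin 7) (Fin 7) ℚ) = matB) (w : List Bool)
    (h : ∀ j : Fin 7, permW w (2 * j) = 2 * j) : evW uA uB w = 1 := by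
  apply Units.ext
  apply mat_ext
  intro j
  rw [evW_rho uA uB hA hB w _ (by omega), h j]
  simp

theorem exists_word (hA : (uA : Matrix (Fin 7) (Fin 7) ℚ) = matA)
    (hB : (uB : Matrix (Fin 7) (Fin 7) ℚ) = matB) (g : GL7)
    (hg : g ∈ Subgroup.closure ({uA, uB} : Set GL7)) : ∃ w, evW uA uB w = g := by
  have iA : uA⁻¹ = evW uA uB (List.replicate 11 true) := by
    rw [inv_eq_iff_mul_eq_one]
    exact evW_one uA uB hA hB _ chkOA
  have iB : uB⁻¹ = evW uA uB (List.replicate 3 false) := by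
    rw [inv_eq_iff_mul_eq_one]
    exact evW_one uA uB hA hB _ chkOB
  induction hg using Subgroup.closure_induction_left with
  | one => exact ⟨[], rfl⟩
  | mul_left x hx y hy ih =>
    obtain ⟨w, rfl⟩ := ih
    rcases hx with rfl | rfl
    · exact ⟨true :: w, rfl⟩
    · exact ⟨false :: w, rfl⟩
  | inv_mul_cancel x hx y hy ih =>
    obtain ⟨w, rfl⟩ := ih
    rcases hx with rfl | rfl
    · exact ⟨_, by rw [iA, ← evW_append]⟩
    · exact ⟨_, by rw [iB, ← evW_append]⟩

/-- The cross product on pure octonions. -/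
def cr (x y : Fin 7 → ℚ) : Fin 7 → ℚ :=
  ![x 1 * y 3 - x 3 * y 1 + (x 2 * y 6 - x 6 * y 2) + (x 4 * y 5 - x 5 * y 4),
    x 3 * y 0 - x 0 * y 3 + (x 2 * y 4 - x 4 * y 2) + (x 5 * y 6 - x 6 * y 5),
    x 6 * y 0 - x 0 * y 6 + (x 4 * y 1 - x 1 * y 4) + (x 3 * y 5 - x 5 * y 3),
    x 0 * y 1 - x 1 * y 0 + (x 5 * y 2 - x 2 * y 5) + (x 4 * y 6 - x 6 * y 4),
    x 5 * y 0 - x 0 * y 5 + (x 1 * y 2 - x 2 * y 1) + (x 6 * y 3 - x 3 * y 6),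
    x 0 * y 4 - x 4 * y 0 + (x 6 * y 1 - x 1 * y 6) + (x 2 * y 3 - x 3 * y 2),
    x 0 * y 2 - x 2 * y 0 + (x 1 * y 5 - x 5 * y 1) + (x 3 * y 4 - x 4 * y 3)]

theorem matA_mulVec (x : Fin 7 → ℚ) : matA *ᵥ x =
    ![(x 1 - x 2 + x 5 - x 6) / 2, (-x 1 - x 3 - x 4 + x 5) / 2, (-x 1 + x 3 + x 4 + x 5) / 2,
      (x 1 + x 2 + x 5 + x 6) / 2, -x 0, (x 2 + x 3 - x 4 - x 6) / 2,
      (-x 2 + x 3 - x 4 + x 6) / 2] := by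
  ext i
  fin_cases i <;>
    simp [matA, Matrix.mulVec, dotProduct, Fin.sum_univ_seven] <;> ring

theorem matB_mulVec (x : Fin 7 → ℚ) : matB *ᵥ x =
    ![-x 5, x 1, x 2, x 6, x 4, x 0, -x 3] := by
  ext i
  fin_cases i <;>
    simp [matB, Matrix.mulVec, dotProduct, Fin.sum_univ_seven]

theorem matA_cr (x y : Fin 7 → ℚ) : matA *ᵥ cr x y = cr (matA *ᵥ x) (matA *ᵥ y) := by
  simp only [matA_mulVec]
  ext i
  fin_cases i <;> simp [cr] <;> ring

theorem matB_cr (x y : Fin 7 → ℚ) : matB *ᵥ cr x y = cr (matB *ᵥ x) (matB *ᵥ y) := by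
  simp only [matB_mulVec]
  ext i
  fin_cases i <;> simp [cr] <;> ring

theorem matA_orth : matAᵀ * matA = 1 := by
  ext i j
  fin_cases i <;> fin_cases j <;>
    simp [matA, Matrix.mul_apply, Fin.sum_univ_seven, Matrix.one_apply] <;> norm_num

theorem matB_orth : matBᵀ * matB = 1 := by
  ext i j
  fin_cases i <;> fin_cases j <;>
    simp [matB, Matrix.mul_apply, Fin.sum_univ_seven, Matrix.one_apply]

def Good (g : Matrix (Fin 7) (Fin 7) ℚ) : Prop :=
  gᵀ * g = 1 ∧ g.det = 1 ∧ ∀ x y, g *ᵥ cr x y = cr (g *ᵥ x) (g *ᵥ y)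

theorem good_mul {g h : Matrix (Fin 7) (Fin 7) ℚ} (hg : Good g) (hh : Good h) : Good (g * h) := by
  refine ⟨?_, ?_, ?_⟩
  · rw [Matrix.transpose_mul, Matrix.mul_assoc, ← Matrix.mul_assoc gᵀ, hg.1, Matrix.one_mul, hh.1]
  · rw [Matrix.det_mul, hg.2.1, hh.2.1, mul_one]
  · intro x y
    simp only [← Matrix.mulVec_mulVec, hh.2.2, hg.2.2]

theorem good_evW (hA : (uA : Matrix (Fin 7) (Fin 7) ℚ) = matA)
    (hB : (uB : Matrix (Fin 7) (Fin 7) ℚ) = matB) (w : List Bool) :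
    Good (evW uA uB w : Matrix (Fin 7) (Fin 7) ℚ) := by
  induction w with
  | nil => exact ⟨by simp [evW], by simp [evW], by simp [evW]⟩
  | cons b w ih =>
    simp only [evW, Units.val_mul]
    refine good_mul ?_ ih
    cases b
    · simp only [cond_false, hB]; exact ⟨matB_orth, det_matB, matB_cr⟩
    · simp only [cond_true, hA]; exact ⟨matA_orth, det_matA, matA_cr⟩

theorem good_mem (hA : (uA : Matrix (Fin 7) (Fin 7) ℚ) = matA)
    (hB : (uB : Matrix (Fin 7) (Fin 7) ℚ) = matB) (g : GL7)
    (hg : g ∈ Subgroup.closure ({uA, uB} : Set GL7)) : Good (g : Matrix (Fin 7) (Fin 7) ℚ) := by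
  obtain ⟨w, rfl⟩ := exists_word uA uB hA hB g hg
  exact good_evW uA uB hA hB w

abbrev e (i : Fin 7) : Fin 7 → ℚ := Pi.single i 1

theorem cr02 : cr (e 0) (e 2) = e 6 := by
  ext i; fin_cases i <;> simp [cr, Pi.single_apply]
theorem cr01 : cr (e 0) (e 1) = e 3 := by
  ext i; fin_cases i <;> simp [cr, Pi.single_apply]
theorem cr12 : cr (e 1) (e 2) = e 4 := by
  ext i; fin_cases i <;> simp [cr, Pi.single_apply]
theorem cr23 : cr (e 2) (e 3) = e 5 := by
  ext i; fin_cases i <;> simp [cr, Pi.single_apply]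

theorem good_fix {g : Matrix (Fin 7) (Fin 7) ℚ} (hg : Good g) (h0 : g *ᵥ e 0 = e 0)
    (h1 : g *ᵥ e 1 = e 1) (h2 : g *ᵥ e 2 = e 2) : g = 1 := by
  have h3 : g *ᵥ e 3 = e 3 := by rw [← cr01, hg.2.2, h0, h1]
  have h4 : g *ᵥ e 4 = e 4 := by rw [← cr12, hg.2.2, h1, h2]
  have h5 : g *ᵥ e 5 = e 5 := by rw [← cr23, hg.2.2, h2, h3]
  have h6 : g *ᵥ e 6 = e 6 := by rw [← cr02, hg.2.2, h0, h2]
  apply mat_ext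
  intro j
  rw [rho_even, Matrix.one_mulVec]
  fin_cases j <;> assumption
end

theorem word_t (i : ℕ) (hi : i < 126) : ∃ w, permW w 4 = i := by
  have : i ∈ tL.map fun n => permW (dec 20 n) 4 := by rw [chkT]; simpa using hi
  obtain ⟨n, -, hn⟩ := List.mem_map.1 this
  exact ⟨_, hn⟩

theorem word_s (y : ℕ) (hy : y ∈ yL) : ∃ w, permW w 4 = 4 ∧ permW w 0 = y := by
  have : (4, y) ∈ sL.map fun n => (permW (dec 20 n) 4, permW (dec 20 n) 0) := by
    rw [chkS]; exact List.mem_map.2 ⟨y, hy, rfl⟩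
  obtain ⟨n, -, hn⟩ := List.mem_map.1 this
  exact ⟨_, congrArg Prod.fst hn, congrArg Prod.snd hn⟩

theorem word_r (z : ℕ) (hz : z ∈ zL) :
    ∃ w, permW w 4 = 4 ∧ permW w 0 = 0 ∧ permW w 2 = z := by
  have : (4, 0, z) ∈ rL.map fun n =>
      (permW (dec 20 n) 4, permW (dec 20 n) 0, permW (dec 20 n) 2) := by
    rw [chkR]; exact List.mem_map.2 ⟨z, hz, rfl⟩
  obtain ⟨n, -, hn⟩ := List.mem_map.1 this
  exact ⟨_, congrArg Prod.fst hn, congrArg (fun p => p.2.1) hn, congrArg (fun p => p.2.2) hn⟩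

theorem yL_lt : ∀ y ∈ yL, y < 126 := by decide
theorem zL_lt : ∀ z ∈ zL, z < 126 := by decide
theorem yL_zL : ∀ z ∈ yL, z = 0 ∨ z = 1 ∨ z = 12 ∨ z = 13 ∨ z ∈ zL := by decide

theorem mulVec_inj (g : GL7) {x y : Fin 7 → ℚ}
    (h : (g : Matrix (Fin 7) (Fin 7) ℚ) *ᵥ x = (g : Matrix (Fin 7) (Fin 7) ℚ) *ᵥ y) : x = y := by
  have := congrArg (fun v => ((g⁻¹ : GL7) : Matrix (Fin 7) (Fin 7) ℚ) *ᵥ v) h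
  simpa [Matrix.mulVec_mulVec] using this

theorem inv_mulVec (g : GL7) {x y : Fin 7 → ℚ}
    (h : (g : Matrix (Fin 7) (Fin 7) ℚ) *ᵥ x = y) :
    ((g⁻¹ : GL7) : Matrix (Fin 7) (Fin 7) ℚ) *ᵥ y = x := by
  rw [← h, Matrix.mulVec_mulVec]; simp

theorem r0 : rho 0 = e 0 := rho_even 0
theorem r2 : rho 2 = e 1 := rho_even 1
theorem r4 : rho 4 = e 2 := rho_even 2
theorem r12 : rho 12 = e 6 := rho_even 6
theorem r1 : rho 1 = -e 0 := rho_odd 0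
theorem r13 : rho 13 = -e 6 := rho_odd 6

theorem e_ne {i j : Fin 7} (h : i ≠ j) : e i ≠ e j ∧ e i ≠ -e j := by
  constructor
  · intro h'
    have := congrFun h' i
    simp [h] at this
  · intro h'
    have := congrFun h' i
    simp [h] at this

theorem z_mem (uA uB : GL7) (hA : (uA : Matrix (Fin 7) (Fin 7) ℚ) = matA)
    (hB : (uB : Matrix (Fin 7) (Fin 7) ℚ) = matB) (w : List Bool) (h4 : permW w 4 = 4)
    (h0 : permW w 0 = 0) : permW w 2 ∈ zL := by
  have hy : permW w 2 ∈ yL := by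
    apply chkY _ (permW_lt w 2 (by omega))
    have := permW_nn w 4 2 (by omega) (by omega) (by decide +kernel)
    rwa [h4] at this
  have k0 := evW_rho uA uB hA hB w 0 (by omega)
  have k4 := evW_rho uA uB hA hB w 4 (by omega)
  have k2 := evW_rho uA uB hA hB w 2 (by omega)
  rw [h0, r0] at k0
  rw [h4, r4] at k4
  have k6 : (evW uA uB w : Matrix (Fin 7) (Fin 7) ℚ) *ᵥ e 6 = e 6 := by
    rw [← cr02, (good_evW uA uB hA hB w).2.2, k0, k4]
  have key : ∀ v, (evW uA uB w : Matrix (Fin 7) (Fin 7) ℚ) *ᵥ v = v → e 1 ≠ v →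
      rho (permW w 2) ≠ v := by
    intro v hv hne h
    rw [h, r2] at k2
    exact hne (mulVec_inj _ (k2.trans hv.symm))
  have n0 : (evW uA uB w : Matrix (Fin 7) (Fin 7) ℚ) *ᵥ (-e 0) = -e 0 := by
    rw [Matrix.mulVec_neg, k0]
  have n6 : (evW uA uB w : Matrix (Fin 7) (Fin 7) ℚ) *ᵥ (-e 6) = -e 6 := by
    rw [Matrix.mulVec_neg, k6]
  have d0 := @e_ne 1 0 (by decide)
  have d6 := @e_ne 1 6 (by decide)
  rcases yL_zL _ hy with h | h | h | h | h
  · exact absurd (by rw [h, r0]) (key _ k0 d0.1)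
  · exact absurd (by rw [h, r1]) (key _ n0 d0.2)
  · exact absurd (by rw [h, r12]) (key _ k6 d6.1)
  · exact absurd (by rw [h, r13]) (key _ n6 d6.2)
  · exact h

theorem card_gamma (uA uB : GL7) (hA : (uA : Matrix (Fin 7) (Fin 7) ℚ) = matA)
    (hB : (uB : Matrix (Fin 7) (Fin 7) ℚ) = matB) :
    Nat.card (Subgroup.closure ({uA, uB} : Set GL7)) = 12096 := by
  choose t ht using word_t
  choose s hs using word_s
  choose r hr using word_r
  let f : Fin 126 × yL.toFinset × zL.toFinset → Subgroup.closure ({uA, uB} : Set GL7) :=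
    fun p => ⟨evW uA uB (t p.1 p.1.2) * (evW uA uB (s p.2.1 (List.mem_toFinset.1 p.2.1.2)) *
        evW uA uB (r p.2.2 (List.mem_toFinset.1 p.2.2.2))),
      mul_mem (evW_mem _ _ _) (mul_mem (evW_mem _ _ _) (evW_mem _ _ _))⟩
  have ev := evW_rho uA uB hA hB
  have hf : Function.Bijective f := by
    constructor
    · rintro ⟨i, y, z⟩ ⟨i', y', z'⟩ h
      have h1 := congrArg (fun g : Subgroup.closure ({uA, uB} : Set GL7) => (g : GL7)) h
      simp only [f] at h1
      have hy := List.mem_toFinset.1 y.2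
      have hz := List.mem_toFinset.1 z.2
      have hy' := List.mem_toFinset.1 y'.2
      have hz' := List.mem_toFinset.1 z'.2
      have hi : i = i' := by
        have h2 := congrArg (fun g : GL7 => (g : Matrix (Fin 7) (Fin 7) ℚ) *ᵥ rho 4) h1
        simp only [Units.val_mul, ← Matrix.mulVec_mulVec] at h2
        rw [ev _ 4 (by omega), ev _ 4 (by omega), (hr z hz).1, (hr z' hz').1,
          ev _ 4 (by omega), ev _ 4 (by omega), (hs y hy).1, (hs y' hy').1,
          ev _ 4 (by omega), ev _ 4 (by omega), ht, ht] at h2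
        exact Fin.ext (rho_inj i.2 i'.2 h2)
      subst hi
      have h1 := mul_left_cancel h1
      have hyy : y = y' := by
        have h2 := congrArg (fun g : GL7 => (g : Matrix (Fin 7) (Fin 7) ℚ) *ᵥ rho 0) h1
        simp only [Units.val_mul, ← Matrix.mulVec_mulVec] at h2
        rw [ev _ 0 (by omega), ev _ 0 (by omega), (hr z hz).2.1, (hr z' hz').2.1,
          ev _ 0 (by omega), ev _ 0 (by omega), (hs y hy).2, (hs y' hy').2] at h2
        exact Subtype.ext (rho_inj (yL_lt _ hy) (yL_lt _ hy') h2)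
      subst hyy
      have h1 := mul_left_cancel h1
      have hzz : z = z' := by
        have h2 := congrArg (fun g : GL7 => (g : Matrix (Fin 7) (Fin 7) ℚ) *ᵥ rho 2) h1
        rw [ev _ 2 (by omega), ev _ 2 (by omega), (hr z hz).2.2, (hr z' hz').2.2] at h2
        exact Subtype.ext (rho_inj (zL_lt _ hz) (zL_lt _ hz') h2)
      subst hzz
      rfl
    · rintro ⟨g, hg⟩
      have wd := exists_word uA uB hA hB
      obtain ⟨w, rfl⟩ := wd g hg
      have hi := permW_lt w 4 (by omega)
      obtain ⟨w1, hw1⟩ := wd ((evW uA uB (t _ hi))⁻¹ * evW uA uB w)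
        (mul_mem (inv_mem (evW_mem _ _ _)) (evW_mem _ _ _))
      have a4 : permW w1 4 = 4 := by
        apply rho_inj (permW_lt _ _ (by omega)) (by omega)
        rw [← ev _ 4 (by omega), hw1, Units.val_mul, ← Matrix.mulVec_mulVec, ev _ 4 (by omega)]
        apply inv_mulVec
        rw [ev _ 4 (by omega), ht]
      have hy : permW w1 0 ∈ yL := by
        apply chkY _ (permW_lt w1 0 (by omega))
        have := permW_nn w1 4 0 (by omega) (by omega) (by decide +kernel)
        rwa [a4] at this
      obtain ⟨w2, hw2⟩ := wd ((evW uA uB (s _ hy))⁻¹ * evW uA uB w1)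
        (mul_mem (inv_mem (evW_mem _ _ _)) (evW_mem _ _ _))
      have b4 : permW w2 4 = 4 := by
        apply rho_inj (permW_lt _ _ (by omega)) (by omega)
        rw [← ev _ 4 (by omega), hw2, Units.val_mul, ← Matrix.mulVec_mulVec, ev _ 4 (by omega), a4]
        apply inv_mulVec
        rw [ev _ 4 (by omega), (hs _ hy).1]
      have b0 : permW w2 0 = 0 := by
        apply rho_inj (permW_lt _ _ (by omega)) (by omega)
        rw [← ev _ 0 (by omega), hw2, Units.val_mul, ← Matrix.mulVec_mulVec, ev _ 0 (by omega)]
        apply inv_mulVec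
        rw [ev _ 0 (by omega), (hs _ hy).2]
      have hz := z_mem uA uB hA hB w2 b4 b0
      have hr' := hr _ hz
      have c4 : ((evW uA uB (r _ hz))⁻¹ * evW uA uB w2 : GL7).val *ᵥ rho 4 = rho 4 := by
        rw [Units.val_mul, ← Matrix.mulVec_mulVec, ev _ 4 (by omega), b4]
        apply inv_mulVec
        rw [ev _ 4 (by omega), hr'.1]
      have c0 : ((evW uA uB (r _ hz))⁻¹ * evW uA uB w2 : GL7).val *ᵥ rho 0 = rho 0 := by
        rw [Units.val_mul, ← Matrix.mulVec_mulVec, ev _ 0 (by omega), b0]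
        apply inv_mulVec
        rw [ev _ 0 (by omega), hr'.2.1]
      have c2 : ((evW uA uB (r _ hz))⁻¹ * evW uA uB w2 : GL7).val *ᵥ rho 2 = rho 2 := by
        rw [Units.val_mul, ← Matrix.mulVec_mulVec, ev _ 2 (by omega)]
        apply inv_mulVec
        rw [ev _ 2 (by omega), hr'.2.2]
      rw [r4] at c4
      rw [r0] at c0
      rw [r2] at c2
      have one : (evW uA uB (r _ hz))⁻¹ * evW uA uB w2 = 1 := by
        apply Units.ext
        exact good_fix (good_mem uA uB hA hB _
          (mul_mem (inv_mem (evW_mem _ _ _)) (evW_mem _ _ _))) c0 c2 c4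
      refine ⟨⟨⟨_, hi⟩, ⟨_, List.mem_toFinset.2 hy⟩, ⟨_, List.mem_toFinset.2 hz⟩⟩, ?_⟩
      apply Subtype.ext
      simp only [f]
      rw [← inv_mul_eq_one.1 one] at hw2
      rw [hw2, mul_inv_cancel_left, hw1, mul_inv_cancel_left]
  rw [← Nat.card_congr (Equiv.ofBijective f hf)]
  have c1 : yL.toFinset.card = 12 := by decide
  have c2 : zL.toFinset.card = 8 := by decide
  rw [Nat.card_eq_fintype_card, Fintype.card_prod, Fintype.card_prod, Fintype.card_coe,
    Fintype.card_coe, Fintype.card_fin, c1, c2]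

theorem diag_mem (uA uB : GL7) (hA : (uA : Matrix (Fin 7) (Fin 7) ℚ) = matA)
    (hB : (uB : Matrix (Fin 7) (Fin 7) ℚ) = matB) (k : Fin 7) :
    ∃ d ∈ Subgroup.closure ({uA, uB} : Set GL7),
      (d : Matrix (Fin 7) (Fin 7) ℚ) = Matrix.diagonal fun i => (signs k i : ℚ) := by
  refine ⟨evW uA uB (dec 20 (dL.getD k 0)), evW_mem _ _ _, mat_ext fun j => ?_⟩
  rw [evW_rho uA uB hA hB _ _ (by omega), chkD]
  rcases signs_pm k j with h | h
  · rw [if_pos h, rho_even]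
    ext i
    simp [Pi.single_apply, h]
  · rw [if_neg (by rw [h]; decide), rho_even, rho_odd]
    ext i
    simp [Pi.single_apply]
    split_ifs with h'
    · subst h'
      simp [h]
    · simp

theorem sum_shift (G : Subgroup GL7) [Fintype G] {M : Type*} [AddCommMonoid M]
    (f : Matrix (Fin 7) (Fin 7) ℚ → M) (d : GL7) (hd : d ∈ G) :
    ∑ g : G, f ((g : GL7) : Matrix (Fin 7) (Fin 7) ℚ) =
      ∑ g : G, f ((d : Matrix (Fin 7) (Fin 7) ℚ) * ((g : GL7) : Matrix (Fin 7) (Fin 7) ℚ)) := by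
  rw [← Equiv.sum_comp (Equiv.mulLeft (⟨d, hd⟩ : G))]
  rfl

theorem sum_zero (uA uB : GL7) (hA : (uA : Matrix (Fin 7) (Fin 7) ℚ) = matA)
    (hB : (uB : Matrix (Fin 7) (Fin 7) ℚ) = matB)
    [Fintype (Subgroup.closure ({uA, uB} : Set GL7))] {ι : Type*} [Fintype ι] [DecidableEq ι]
    (K J : ι → Fin 7) (k : Fin 7) (hk : ∏ a, signs k (K a) = -1) :
    ∑ g : Subgroup.closure ({uA, uB} : Set GL7),
      (((g : GL7) : Matrix (Fin 7) (Fin 7) ℚ).submatrix K J).det = 0 := by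
  obtain ⟨d, hd, hdd⟩ := diag_mem uA uB hA hB k
  have h := sum_shift (Subgroup.closure ({uA, uB} : Set GL7))
    (fun g => (g.submatrix K J).det) d hd
  have h2 : ∀ g : Matrix (Fin 7) (Fin 7) ℚ, (((d : Matrix (Fin 7) (Fin 7) ℚ) * g).submatrix K J).det
      = - (g.submatrix K J).det := by
    intro g
    have : ((d : Matrix (Fin 7) (Fin 7) ℚ) * g).submatrix K J =
        Matrix.of fun i j => (signs k (K i) : ℚ) * (g.submatrix K J) i j := by
      ext i j
      simp [hdd, Matrix.diagonal_mul]
    rw [this, Matrix.det_mul_column]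
    have hk' : ∏ a, (signs k (K a) : ℚ) = -1 := by exact_mod_cast hk
    rw [hk']
    ring
  simp only [h2, Finset.sum_neg_distrib] at h
  linarith

def mn (g : Matrix (Fin 7) (Fin 7) ℚ) (J : Fin 3 → Fin 7) (a b c : Fin 7) : ℚ :=
  (g.submatrix ![a, b, c] J).det

def sm (uA uB : GL7) [Fintype (Subgroup.closure ({uA, uB} : Set GL7))] (J : Fin 3 → Fin 7)
    (a b c : Fin 7) : ℚ :=
  ∑ g : Subgroup.closure ({uA, uB} : Set GL7), mn ((g : GL7) : Matrix (Fin 7) (Fin 7) ℚ) J a b c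

theorem sm_def (uA uB : GL7) [Fintype (Subgroup.closure ({uA, uB} : Set GL7))] (J : Fin 3 → Fin 7)
    (a b c : Fin 7) : sm uA uB J a b c =
  ∑ g : Subgroup.closure ({uA, uB} : Set GL7),
    mn ((g : GL7) : Matrix (Fin 7) (Fin 7) ℚ) J a b c := rfl

theorem sm_zero (uA uB : GL7) (hA : (uA : Matrix (Fin 7) (Fin 7) ℚ) = matA)
    (hB : (uB : Matrix (Fin 7) (Fin 7) ℚ) = matB)
    [Fintype (Subgroup.closure ({uA, uB} : Set GL7))] (J : Fin 3 → Fin 7) (a b c : Fin 7)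
    (h : ∃ k, signs k a * signs k b * signs k c = -1) : sm uA uB J a b c = 0 := by
  obtain ⟨k, hk⟩ := h
  exact sum_zero uA uB hA hB ![a, b, c] J k (by simpa [Fin.prod_univ_three] using hk)

theorem shiftA (uA uB : GL7) (hA : (uA : Matrix (Fin 7) (Fin 7) ℚ) = matA)
    [Fintype (Subgroup.closure ({uA, uB} : Set GL7))] (J : Fin 3 → Fin 7) (a b c : Fin 7) :
    sm uA uB J a b c = ∑ g : Subgroup.closure ({uA, uB} : Set GL7),
      ((matA * ((g : GL7) : Matrix (Fin 7) (Fin 7) ℚ)).submatrix ![a, b, c] J).det := by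
  rw [← hA]
  exact sum_shift (Subgroup.closure ({uA, uB} : Set GL7)) (fun g => (g.submatrix ![a, b, c] J).det)
    uA (Subgroup.subset_closure (by simp))

theorem shiftB (uA uB : GL7) (hB : (uB : Matrix (Fin 7) (Fin 7) ℚ) = matB)
    [Fintype (Subgroup.closure ({uA, uB} : Set GL7))] (J : Fin 3 → Fin 7) (a b c : Fin 7) :
    sm uA uB J a b c = ∑ g : Subgroup.closure ({uA, uB} : Set GL7),
      ((matB * ((g : GL7) : Matrix (Fin 7) (Fin 7) ℚ)).submatrix ![a, b, c] J).det := by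
  rw [← hB]
  exact sum_shift (Subgroup.closure ({uA, uB} : Set GL7)) (fun g => (g.submatrix ![a, b, c] J).det)
    uB (Subgroup.subset_closure (by simp))

theorem matA_mul (x : Matrix (Fin 7) (Fin 7) ℚ) (i j : Fin 7) : (matA * x) i j =
    ![(x 1 j - x 2 j + x 5 j - x 6 j) / 2, (-x 1 j - x 3 j - x 4 j + x 5 j) / 2,
      (-x 1 j + x 3 j + x 4 j + x 5 j) / 2,
      (x 1 j + x 2 j + x 5 j + x 6 j) / 2, -x 0 j, (x 2 j + x 3 j - x 4 j - x 6 j) / 2,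
      (-x 2 j + x 3 j - x 4 j + x 6 j) / 2] i :=
  congrFun (matA_mulVec fun k => x k j) i

theorem matB_mul (x : Matrix (Fin 7) (Fin 7) ℚ) (i j : Fin 7) : (matB * x) i j =
    ![-x 5 j, x 1 j, x 2 j, x 6 j, x 4 j, x 0 j, -x 3 j] i :=
  congrFun (matB_mulVec fun k => x k j) i

theorem idA013 (g : Matrix (Fin 7) (Fin 7) ℚ) (J : Fin 3 → Fin 7) :
    ((matA * g).submatrix ![0, 1, 3] J).det = (1/4) * mn g J 1 2 3 +
      (1/4) * mn g J 1 2 4 +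
      (-1/2) * mn g J 1 2 5 +
      (-1/4) * mn g J 1 3 6 +
      (-1/4) * mn g J 1 4 6 +
      (1/2) * mn g J 1 5 6 +
      (1/4) * mn g J 2 3 5 +
      (1/4) * mn g J 2 4 5 +
      (1/4) * mn g J 3 5 6 +
      (1/4) * mn g J 4 5 6 := by
  simp only [mn, Matrix.det_fin_three, Matrix.submatrix_apply, matA_mul]
  simp
  ring

theorem rowA013 (uA uB : GL7) (hA : (uA : Matrix (Fin 7) (Fin 7) ℚ) = matA)
    (hB : (uB : Matrix (Fin 7) (Fin 7) ℚ) = matB)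
    [Fintype (Subgroup.closure ({uA, uB} : Set GL7))] (J : Fin 3 → Fin 7) :
    sm uA uB J 0 1 3 = (1/4) * sm uA uB J 1 2 4 +
      (1/2) * sm uA uB J 1 5 6 +
      (1/4) * sm uA uB J 2 3 5 := by
  have h := shiftA uA uB hA J 0 1 3
  simp only [idA013, Finset.sum_add_distrib, ← Finset.mul_sum] at h
  simp only [← sm_def uA uB J] at h
  have z := sm_zero uA uB hA hB J
  linear_combination h + (1/4) * z 1 2 3 (by decide) + (-1/2) * z 1 2 5 (by decide) + (-1/4) * z 1 3 6 (by decide) + (-1/4) * z 1 4 6 (by decide) + (1/4) * z 2 4 5 (by decide) + (1/4) * z 3 5 6 (by decide) + (1/4) * z 4 5 6 (by decide)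

theorem idA045 (g : Matrix (Fin 7) (Fin 7) ℚ) (J : Fin 3 → Fin 7) :
    ((matA * g).submatrix ![0, 4, 5] J).det = (1/4) * mn g J 0 1 2 +
      (1/4) * mn g J 0 1 3 +
      (-1/4) * mn g J 0 1 4 +
      (-1/4) * mn g J 0 1 6 +
      (-1/4) * mn g J 0 2 3 +
      (1/4) * mn g J 0 2 4 +
      (-1/4) * mn g J 0 2 5 +
      (1/2) * mn g J 0 2 6 +
      (-1/4) * mn g J 0 3 5 +
      (1/4) * mn g J 0 3 6 +
      (1/4) * mn g J 0 4 5 +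
      (-1/4) * mn g J 0 4 6 +
      (-1/4) * mn g J 0 5 6 := by
  simp only [mn, Matrix.det_fin_three, Matrix.submatrix_apply, matA_mul]
  simp
  ring

theorem rowA045 (uA uB : GL7) (hA : (uA : Matrix (Fin 7) (Fin 7) ℚ) = matA)
    (hB : (uB : Matrix (Fin 7) (Fin 7) ℚ) = matB)
    [Fintype (Subgroup.closure ({uA, uB} : Set GL7))] (J : Fin 3 → Fin 7) :
    sm uA uB J 0 4 5 = (1/4) * sm uA uB J 0 1 3 +
      (1/2) * sm uA uB J 0 2 6 +
      (1/4) * sm uA uB J 0 4 5 := by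
  have h := shiftA uA uB hA J 0 4 5
  simp only [idA045, Finset.sum_add_distrib, ← Finset.mul_sum] at h
  simp only [← sm_def uA uB J] at h
  have z := sm_zero uA uB hA hB J
  linear_combination h + (1/4) * z 0 1 2 (by decide) + (-1/4) * z 0 1 4 (by decide) + (-1/4) * z 0 1 6 (by decide) + (-1/4) * z 0 2 3 (by decide) + (1/4) * z 0 2 4 (by decide) + (-1/4) * z 0 2 5 (by decide) + (-1/4) * z 0 3 5 (by decide) + (1/4) * z 0 3 6 (by decide) + (-1/4) * z 0 4 6 (by decide) + (-1/4) * z 0 5 6 (by decide)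

theorem idA124 (g : Matrix (Fin 7) (Fin 7) ℚ) (J : Fin 3 → Fin 7) :
    ((matA * g).submatrix ![1, 2, 4] J).det = (1/2) * mn g J 0 1 3 +
      (1/2) * mn g J 0 1 4 +
      (1/2) * mn g J 0 3 5 +
      (1/2) * mn g J 0 4 5 := by
  simp only [mn, Matrix.det_fin_three, Matrix.submatrix_apply, matA_mul]
  simp
  ring

theorem rowA124 (uA uB : GL7) (hA : (uA : Matrix (Fin 7) (Fin 7) ℚ) = matA)
    (hB : (uB : Matrix (Fin 7) (Fin 7) ℚ) = matB)
    [Fintype (Subgroup.closure ({uA, uB} : Set GL7))] (J : Fin 3 → Fin 7) :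
    sm uA uB J 1 2 4 = (1/2) * sm uA uB J 0 1 3 +
      (1/2) * sm uA uB J 0 4 5 := by
  have h := shiftA uA uB hA J 1 2 4
  simp only [idA124, Finset.sum_add_distrib, ← Finset.mul_sum] at h
  simp only [← sm_def uA uB J] at h
  have z := sm_zero uA uB hA hB J
  linear_combination h + (1/2) * z 0 1 4 (by decide) + (1/2) * z 0 3 5 (by decide)

theorem idA156 (g : Matrix (Fin 7) (Fin 7) ℚ) (J : Fin 3 → Fin 7) :
    ((matA * g).submatrix ![1, 5, 6] J).det = (-1/4) * mn g J 1 2 3 +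
      (1/4) * mn g J 1 2 4 +
      (-1/4) * mn g J 1 3 6 +
      (1/4) * mn g J 1 4 6 +
      (-1/2) * mn g J 2 3 4 +
      (1/4) * mn g J 2 3 5 +
      (-1/4) * mn g J 2 4 5 +
      (1/2) * mn g J 3 4 6 +
      (-1/4) * mn g J 3 5 6 +
      (1/4) * mn g J 4 5 6 := by
  simp only [mn, Matrix.det_fin_three, Matrix.submatrix_apply, matA_mul]
  simp
  ring

theorem rowA156 (uA uB : GL7) (hA : (uA : Matrix (Fin 7) (Fin 7) ℚ) = matA)
    (hB : (uB : Matrix (Fin 7) (Fin 7) ℚ) = matB)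
    [Fintype (Subgroup.closure ({uA, uB} : Set GL7))] (J : Fin 3 → Fin 7) :
    sm uA uB J 1 5 6 = (1/4) * sm uA uB J 1 2 4 +
      (1/4) * sm uA uB J 2 3 5 +
      (1/2) * sm uA uB J 3 4 6 := by
  have h := shiftA uA uB hA J 1 5 6
  simp only [idA156, Finset.sum_add_distrib, ← Finset.mul_sum] at h
  simp only [← sm_def uA uB J] at h
  have z := sm_zero uA uB hA hB J
  linear_combination h + (-1/4) * z 1 2 3 (by decide) + (-1/4) * z 1 3 6 (by decide) + (1/4) * z 1 4 6 (by decide) + (-1/2) * z 2 3 4 (by decide) + (-1/4) * z 2 4 5 (by decide) + (-1/4) * z 3 5 6 (by decide) + (1/4) * z 4 5 6 (by decide)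

theorem idA346 (g : Matrix (Fin 7) (Fin 7) ℚ) (J : Fin 3 → Fin 7) :
    ((matA * g).submatrix ![3, 4, 6] J).det = (-1/4) * mn g J 0 1 2 +
      (1/4) * mn g J 0 1 3 +
      (-1/4) * mn g J 0 1 4 +
      (1/4) * mn g J 0 1 6 +
      (1/4) * mn g J 0 2 3 +
      (-1/4) * mn g J 0 2 4 +
      (1/4) * mn g J 0 2 5 +
      (1/2) * mn g J 0 2 6 +
      (-1/4) * mn g J 0 3 5 +
      (-1/4) * mn g J 0 3 6 +
      (1/4) * mn g J 0 4 5 +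
      (1/4) * mn g J 0 4 6 +
      (1/4) * mn g J 0 5 6 := by
  simp only [mn, Matrix.det_fin_three, Matrix.submatrix_apply, matA_mul]
  simp
  ring

theorem rowA346 (uA uB : GL7) (hA : (uA : Matrix (Fin 7) (Fin 7) ℚ) = matA)
    (hB : (uB : Matrix (Fin 7) (Fin 7) ℚ) = matB)
    [Fintype (Subgroup.closure ({uA, uB} : Set GL7))] (J : Fin 3 → Fin 7) :
    sm uA uB J 3 4 6 = (1/4) * sm uA uB J 0 1 3 +
      (1/2) * sm uA uB J 0 2 6 +
      (1/4) * sm uA uB J 0 4 5 := by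
  have h := shiftA uA uB hA J 3 4 6
  simp only [idA346, Finset.sum_add_distrib, ← Finset.mul_sum] at h
  simp only [← sm_def uA uB J] at h
  have z := sm_zero uA uB hA hB J
  linear_combination h + (-1/4) * z 0 1 2 (by decide) + (-1/4) * z 0 1 4 (by decide) + (1/4) * z 0 1 6 (by decide) + (1/4) * z 0 2 3 (by decide) + (-1/4) * z 0 2 4 (by decide) + (1/4) * z 0 2 5 (by decide) + (-1/4) * z 0 3 5 (by decide) + (-1/4) * z 0 3 6 (by decide) + (1/4) * z 0 4 6 (by decide) + (1/4) * z 0 5 6 (by decide)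

theorem idB013 (g : Matrix (Fin 7) (Fin 7) ℚ) (J : Fin 3 → Fin 7) :
    ((matB * g).submatrix ![0, 1, 3] J).det = (1) * mn g J 1 5 6 := by
  simp only [mn, Matrix.det_fin_three, Matrix.submatrix_apply, matB_mul]
  simp
  ring

theorem rowB013 (uA uB : GL7) (hA : (uA : Matrix (Fin 7) (Fin 7) ℚ) = matA)
    (hB : (uB : Matrix (Fin 7) (Fin 7) ℚ) = matB)
    [Fintype (Subgroup.closure ({uA, uB} : Set GL7))] (J : Fin 3 → Fin 7) :
    sm uA uB J 0 1 3 = (1) * sm uA uB J 1 5 6 := by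
  have h := shiftB uA uB hB J 0 1 3
  simp only [idB013, Finset.sum_add_distrib, ← Finset.mul_sum] at h
  simp only [← sm_def uA uB J] at h
  have z := sm_zero uA uB hA hB J
  linear_combination h

theorem idB026 (g : Matrix (Fin 7) (Fin 7) ℚ) (J : Fin 3 → Fin 7) :
    ((matB * g).submatrix ![0, 2, 6] J).det = (1) * mn g J 2 3 5 := by
  simp only [mn, Matrix.det_fin_three, Matrix.submatrix_apply, matB_mul]
  simp
  ring

theorem rowB026 (uA uB : GL7) (hA : (uA : Matrix (Fin 7) (Fin 7) ℚ) = matA)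
    (hB : (uB : Matrix (Fin 7) (Fin 7) ℚ) = matB)
    [Fintype (Subgroup.closure ({uA, uB} : Set GL7))] (J : Fin 3 → Fin 7) :
    sm uA uB J 0 2 6 = (1) * sm uA uB J 2 3 5 := by
  have h := shiftB uA uB hB J 0 2 6
  simp only [idB026, Finset.sum_add_distrib, ← Finset.mul_sum] at h
  simp only [← sm_def uA uB J] at h
  have z := sm_zero uA uB hA hB J
  linear_combination h

def L : Fin 7 → Fin 3 → Fin 7 :=
  ![![0, 1, 3], ![0, 2, 6], ![0, 4, 5], ![1, 2, 4], ![1, 5, 6], ![2, 3, 5], ![3, 4, 6]]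

def LS : Fin 7 → Finset (Fin 7) :=
  ![{0, 1, 3}, {0, 2, 6}, {0, 4, 5}, {1, 2, 4}, {1, 5, 6}, {2, 3, 5}, {3, 4, 6}]

theorem L_inj : ∀ m : Fin 7, Function.Injective (L m) := by decide
theorem L_mem : ∀ (m : Fin 7) (i : Fin 3), L m i ∈ LS m := by decide
theorem L_surj : ∀ (m : Fin 7), ∀ j ∈ LS m, ∃ i, L m i = j := by decide
theorem LS_inj : Function.Injective LS := by decide

theorem line_or : ∀ s ∈ (Finset.univ : Finset (Fin 7)).powersetCard 3,
    (∃ m, LS m = s) ∨ ∃ k, ∏ i ∈ s, signs k i = -1 := by decide +kernel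
theorem pair_or : ∀ s ∈ (Finset.univ : Finset (Fin 7)).powersetCard 2,
    ∃ k, ∏ i ∈ s, signs k i = -1 := by decide +kernel
theorem single_or : ∀ s ∈ (Finset.univ : Finset (Fin 7)).powersetCard 1,
    ∃ k, ∏ i ∈ s, signs k i = -1 := by decide +kernel
theorem LS_card : ∀ m, LS m ∈ (Finset.univ : Finset (Fin 7)).powersetCard 3 := by decide +kernel

theorem sub_line (g : Matrix (Fin 7) (Fin 7) ℚ) (m : Fin 7) :
    (g.submatrix (Subtype.val : LS m → Fin 7) (Subtype.val : LS m → Fin 7)).det =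
      (g.submatrix (L m) (L m)).det := by
  let f : Fin 3 → LS m := fun i => ⟨L m i, L_mem m i⟩
  have hf : Function.Bijective f := by
    constructor
    · intro i j h
      exact L_inj m (congrArg Subtype.val h)
    · rintro ⟨j, hj⟩
      obtain ⟨i, hi⟩ := L_surj m j hj
      exact ⟨i, Subtype.ext hi⟩
  rw [← Matrix.det_submatrix_equiv_self (Equiv.ofBijective f hf)]
  rfl

theorem sm_const (uA uB : GL7) (hA : (uA : Matrix (Fin 7) (Fin 7) ℚ) = matA)
    (hB : (uB : Matrix (Fin 7) (Fin 7) ℚ) = matB)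
    [Fintype (Subgroup.closure ({uA, uB} : Set GL7))] (J : Fin 3 → Fin 7) (m : Fin 7) :
    ∑ g : Subgroup.closure ({uA, uB} : Set GL7),
      (((g : GL7) : Matrix (Fin 7) (Fin 7) ℚ).submatrix (L m) J).det = sm uA uB J 0 1 3 := by
  have a0 := rowA013 uA uB hA hB J
  have a2 := rowA045 uA uB hA hB J
  have a3 := rowA124 uA uB hA hB J
  have a4 := rowA156 uA uB hA hB J
  have a6 := rowA346 uA uB hA hB J
  have b0 := rowB013 uA uB hA hB J
  have b1 := rowB026 uA uB hA hB J
  have t1 : sm uA uB J 0 2 6 = sm uA uB J 0 1 3 := by linarith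
  have t2 : sm uA uB J 0 4 5 = sm uA uB J 0 1 3 := by linarith
  have t3 : sm uA uB J 1 2 4 = sm uA uB J 0 1 3 := by linarith
  have t4 : sm uA uB J 1 5 6 = sm uA uB J 0 1 3 := by linarith
  have t5 : sm uA uB J 2 3 5 = sm uA uB J 0 1 3 := by linarith
  have t6 : sm uA uB J 3 4 6 = sm uA uB J 0 1 3 := by linarith
  fin_cases m
  · rfl
  · exact t1
  · exact t2
  · exact t3
  · exact t4
  · exact t5
  · exact t6

theorem lines_sum (g : Matrix (Fin 7) (Fin 7) ℚ) (h : Good gᵀ) :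
    ∑ m : Fin 7, (g.submatrix ![0, 1, 3] (L m)).det = 1 := by
  have hr : ∀ i, gᵀ *ᵥ e i = g i := by
    intro i
    ext j
    simp
  have h1 : cr (g 0) (g 1) = g 3 := by
    rw [← hr 0, ← hr 1, ← h.2.2, cr01, hr]
  have h2 : ∑ j, g 3 j * g 3 j = 1 := by
    have h3 : g * gᵀ = 1 := by
      have := h.1
      rwa [Matrix.transpose_transpose] at this
    have := congrFun (congrFun h3 3) 3
    simpa [Matrix.mul_apply] using this
  have h3 : ∑ j, cr (g 0) (g 1) j * g 3 j = 1 := by rw [h1]; exact h2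
  rw [← h3]
  simp only [Matrix.det_fin_three, Matrix.submatrix_apply, Fin.sum_univ_seven]
  simp [L, cr]
  ring

theorem inv_eq_transpose (g : GL7) (h : Good (g : Matrix (Fin 7) (Fin 7) ℚ)) :
    ((g⁻¹ : GL7) : Matrix (Fin 7) (Fin 7) ℚ) = (g : Matrix (Fin 7) (Fin 7) ℚ)ᵀ :=
  Units.inv_eq_of_mul_eq_one_left h.1

theorem palin_gen {n : Type} [Fintype n] [DecidableEq n] (g : Matrix n n ℚ) (h : gᵀ * g = 1)
    (hd : g.det = 1) : g.charpoly = (-1) ^ Fintype.card n * g.charpoly.reverse := by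
  have hu : IsUnit g := by
    rw [Matrix.isUnit_iff_isUnit_det, hd]
    exact isUnit_one
  have h1 := Matrix.charpoly_inv g hu
  rw [Matrix.inv_eq_left_inv h, Matrix.charpoly_transpose, hd, ← Matrix.reverse_charpoly,
    Ring.inverse_one, map_one, mul_one] at h1
  exact h1

theorem neg_aux (p q : ℚ[X]) (k : ℕ) (hk : Odd k) (h : p = (-1) ^ k * q) : p = - q := by
  rw [h, hk.neg_one_pow, neg_one_mul]

theorem palin (g : Matrix (Fin 7) (Fin 7) ℚ) (h : Good g) : g.charpoly = - g.charpoly.reverse :=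
  neg_aux _ _ (Fintype.card (Fin 7)) (by rw [Fintype.card_fin]; decide) (palin_gen g h.1 h.2.1)

theorem palin_coeff (g : Matrix (Fin 7) (Fin 7) ℚ) (h : Good g) (k : ℕ) (hk : k ≤ 7) :
    g.charpoly.coeff k = - g.charpoly.coeff (7 - k) := by
  have h1 := congrArg (fun p => Polynomial.coeff p k) (palin g h)
  simp only [Polynomial.coeff_neg, Polynomial.coeff_reverse, Matrix.charpoly_natDegree_eq_dim,
    Fintype.card_fin, Polynomial.revAt_le hk] at h1
  exact h1

theorem minors_zero (uA uB : GL7) (hA : (uA : Matrix (Fin 7) (Fin 7) ℚ) = matA)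
    (hB : (uB : Matrix (Fin 7) (Fin 7) ℚ) = matB)
    [Fintype (Subgroup.closure ({uA, uB} : Set GL7))] (s : Finset (Fin 7))
    (h : ∃ k, ∏ i ∈ s, signs k i = -1) :
    ∑ g : Subgroup.closure ({uA, uB} : Set GL7),
      (((g : GL7) : Matrix (Fin 7) (Fin 7) ℚ).submatrix (Subtype.val : s → Fin 7)
        (Subtype.val : s → Fin 7)).det = 0 := by
  obtain ⟨k, hk⟩ := h
  refine sum_zero uA uB hA hB _ _ k ?_
  rw [← hk]
  exact Finset.prod_coe_sort s (fun i => signs k i)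

theorem coeff_sum (uA uB : GL7)
    [Fintype (Subgroup.closure ({uA, uB} : Set GL7))] (k : ℕ) (hk : k ≤ 7) :
    ∑ g : Subgroup.closure ({uA, uB} : Set GL7),
      (((g : GL7) : Matrix (Fin 7) (Fin 7) ℚ).charpoly).coeff (7 - k) =
    (-1) ^ k * ∑ s ∈ (Finset.univ : Finset (Fin 7)).powersetCard k,
      ∑ g : Subgroup.closure ({uA, uB} : Set GL7),
      (((g : GL7) : Matrix (Fin 7) (Fin 7) ℚ).submatrix (Subtype.val : s → Fin 7)
        (Subtype.val : s → Fin 7)).det := by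
  rw [Finset.sum_comm, Finset.mul_sum]
  refine Finset.sum_congr rfl fun g _ => ?_
  have := Matrix.charpoly_coeff_eq_sum_minors ((g : GL7) : Matrix (Fin 7) (Fin 7) ℚ) k
    (by simpa using hk)
  rwa [Fintype.card_fin] at this

theorem main_sum (uA uB : GL7) (hA : (uA : Matrix (Fin 7) (Fin 7) ℚ) = matA)
    (hB : (uB : Matrix (Fin 7) (Fin 7) ℚ) = matB)
    [Fintype (Subgroup.closure ({uA, uB} : Set GL7))] :
    ∑ g : Subgroup.closure ({uA, uB} : Set GL7),
      ((g : GL7) : Matrix (Fin 7) (Fin 7) ℚ).charpoly =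
    12096 * (X ^ 7 - X ^ 4 + X ^ 3 - 1) := by
  have hcard : (∑ _g : Subgroup.closure ({uA, uB} : Set GL7), (1 : ℚ)) = 12096 := by
    have := card_gamma uA uB hA hB
    rw [Nat.card_eq_fintype_card] at this
    simp [this]
  have good : ∀ g : Subgroup.closure ({uA, uB} : Set GL7),
      Good ((g : GL7) : Matrix (Fin 7) (Fin 7) ℚ) := fun g => good_mem uA uB hA hB g g.2
  have goodT : ∀ g : Subgroup.closure ({uA, uB} : Set GL7),
      Good ((g : GL7) : Matrix (Fin 7) (Fin 7) ℚ)ᵀ := by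
    intro g
    rw [← inv_eq_transpose g (good g)]
    exact good_mem uA uB hA hB _ (inv_mem g.2)
  have c7 : ∑ g : Subgroup.closure ({uA, uB} : Set GL7),
      (((g : GL7) : Matrix (Fin 7) (Fin 7) ℚ).charpoly).coeff 7 = 12096 := by
    rw [← hcard]
    refine Finset.sum_congr rfl fun g _ => ?_
    have h1 := Matrix.charpoly_monic ((g : GL7) : Matrix (Fin 7) (Fin 7) ℚ)
    have h2 := Matrix.charpoly_natDegree_eq_dim ((g : GL7) : Matrix (Fin 7) (Fin 7) ℚ)
    rw [Fintype.card_fin] at h2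
    have h3 := h1.coeff_natDegree
    rwa [h2] at h3
  have c6 : ∑ g : Subgroup.closure ({uA, uB} : Set GL7),
      (((g : GL7) : Matrix (Fin 7) (Fin 7) ℚ).charpoly).coeff 6 = 0 := by
    have := coeff_sum uA uB 1 (by omega)
    rw [Finset.sum_eq_zero fun s hs => minors_zero uA uB hA hB s (single_or s hs)] at this
    simpa using this
  have c5 : ∑ g : Subgroup.closure ({uA, uB} : Set GL7),
      (((g : GL7) : Matrix (Fin 7) (Fin 7) ℚ).charpoly).coeff 5 = 0 := by
    have := coeff_sum uA uB 2 (by omega)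
    rw [Finset.sum_eq_zero fun s hs => minors_zero uA uB hA hB s (pair_or s hs)] at this
    simpa using this
  have c4 : ∑ g : Subgroup.closure ({uA, uB} : Set GL7),
      (((g : GL7) : Matrix (Fin 7) (Fin 7) ℚ).charpoly).coeff 4 = -12096 := by
    have h := coeff_sum uA uB 3 (by omega)
    have hsub : Finset.univ.map ⟨LS, LS_inj⟩ ⊆ (Finset.univ : Finset (Fin 7)).powersetCard 3 := by
      intro s hs
      obtain ⟨m, -, rfl⟩ := Finset.mem_map.1 hs
      exact LS_card m
    rw [← Finset.sum_subset hsub, Finset.sum_map] at h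
    · simp only [Function.Embedding.coeFn_mk, sub_line] at h
      rw [Finset.sum_congr rfl fun m _ => sm_const uA uB hA hB (L m) m] at h
      simp only [sm_def] at h
      rw [Finset.sum_comm] at h
      simp only [mn, lines_sum _ (goodT _), hcard] at h
      rw [h]
      norm_num
    · intro s hs hs'
      rcases line_or s hs with ⟨m, rfl⟩ | h'
      · exact absurd (Finset.mem_map.2 ⟨m, Finset.mem_univ _, rfl⟩) hs'
      · exact minors_zero uA uB hA hB s h'
  have pal : ∀ k ≤ 7, ∑ g : Subgroup.closure ({uA, uB} : Set GL7),
      (((g : GL7) : Matrix (Fin 7) (Fin 7) ℚ).charpoly).coeff k =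
      - ∑ g : Subgroup.closure ({uA, uB} : Set GL7),
      (((g : GL7) : Matrix (Fin 7) (Fin 7) ℚ).charpoly).coeff (7 - k) := by
    intro k hk
    rw [← Finset.sum_neg_distrib]
    exact Finset.sum_congr rfl fun g _ => palin_coeff _ (good g) k hk
  have c3 := pal 3 (by omega)
  have c2 := pal 2 (by omega)
  have c1 := pal 1 (by omega)
  have c0 := pal 0 (by omega)
  norm_num [c4, c5, c6, c7] at c0 c1 c2 c3
  have hC : (12096 : ℚ[X]) = C 12096 := (map_ofNat C 12096).symm
  ext n
  rw [Polynomial.finsetSum_coeff, hC, Polynomial.coeff_C_mul]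
  simp only [Polynomial.coeff_sub, Polynomial.coeff_add, Polynomial.coeff_X_pow,
    Polynomial.coeff_one]
  by_cases hn : n ≤ 7
  · interval_cases n <;> norm_num [c0, c1, c2, c3, c4, c5, c6, c7]
  · rw [Finset.sum_eq_zero]
    · have h0 : n ≠ 7 := by omega
      have h1 : n ≠ 4 := by omega
      have h2 : n ≠ 3 := by omega
      have h3 : n ≠ 0 := by omega
      simp [h0, h1, h2, h3]
    · intro g _
      apply Polynomial.coeff_eq_zero_of_natDegree_lt
      rw [Matrix.charpoly_natDegree_eq_dim, Fintype.card_fin]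
      omega

end helpers

/-- `A` and `B` are invertible, the subgroup `Γ ⊆ GL₇(ℚ)` they generate is finite of order
`12096`, and `∑_{g ∈ Γ} det (X·I₇ − g) = 12096 (X⁷ − X⁴ + X³ − 1)` in `ℚ[X]`. -/
theorem statement8 :
    IsUnit matA ∧ IsUnit matB ∧
      ∀ uA uB : (Matrix (Fin 7) (Fin 7) ℚ)ˣ,
        (↑uA : Matrix (Fin 7) (Fin 7) ℚ) = matA → (↑uB : Matrix (Fin 7) (Fin 7) ℚ) = matB →
        Nat.card ↥(Subgroup.closure ({uA, uB} : Set ((Matrix (Fin 7) (Fin 7) ℚ)ˣ))) = 12096 ∧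
        (∑ᶠ g ∈ (Subgroup.closure ({uA, uB} : Set ((Matrix (Fin 7) (Fin 7) ℚ)ˣ)) :
              Set ((Matrix (Fin 7) (Fin 7) ℚ)ˣ)),
            Matrix.charpoly (↑g : Matrix (Fin 7) (Fin 7) ℚ))
          = 12096 * (X ^ 7 - X ^ 4 + X ^ 3 - 1) := by
  refine ⟨?_, ?_, ?_⟩
  · rw [Matrix.isUnit_iff_isUnit_det, det_matA]
    exact isUnit_one
  · rw [Matrix.isUnit_iff_isUnit_det, det_matB]
    exact isUnit_one
  · intro uA uB hA hB
    have hc := card_gamma uA uB hA hB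
    refine ⟨hc, ?_⟩
    have hfin : Finite (Subgroup.closure ({uA, uB} : Set GL7)) :=
      Nat.finite_of_card_ne_zero (by rw [hc]; norm_num)
    have := Fintype.ofFinite (Subgroup.closure ({uA, uB} : Set GL7))
    rw [← main_sum uA uB hA hB, ← finsum_eq_sum_of_fintype]
    exact (finsum_set_coe_eq_finsum_mem
      (f := fun g : GL7 => (g : Matrix (Fin 7) (Fin 7) ℚ).charpoly) _).symm
end
end

section
/- Consider the following 23 labelled weight data: one orthogonal datum with eigenvalue list E = {0}; one orthogonal datum with E = {−22, 0, 22}; one symplectic datum with E = {−w, w} for each w ∈ {11, 15, 17, 19, 21}, and two distinct symplectic data each with E = {−23, 23}; one symplectic datum with E = {−w, −v, v, w} for each pair (w,v) ∈ {(19,7), (21,5), (21,9), (21,13), (23,7), (23,9), (23,13)}; and one symplectic datum with E = {−w, −v, −u, u, v, w} for each triple (w,v,u) ∈ {(23,13,5), (23,15,3), (23,15,7), (23,17,5), (23,17,9), (23,19,3), (23,19,11)}. Call a 'parameter' a finite set S of pairs (π, d), where π is one of these 23 data and d ≥ 1 is an integer which is odd if π is symplectic and even if π is orthogonal, such that the multiset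 ⋃_{(π,d) ∈ S} { e + d − 1 − 2j : e ∈ E(π), 0 ≤ j ≤ d − 1 } equals the set {±1, ±3, ±5, …, ±23} of the 24 odd integers of absolute value at most 23, each with multiplicity one. Then the number of such parameters S is exactly 121. -/
noncomputable section

/-- The 23 labelled weight data: the eigenvalue multiset together with a flag
(`true` = symplectic, `false` = orthogonal). -/
def datum : Fin 23 → Multiset ℤ × Bool :=
  ![({0}, false),
    ({-22, 0, 22}, false),
    ({-11, 11}, true), ({-15, 15}, true), ({-17, 17}, true), ({-19, 19}, true),
    ({-21, 21}, true),
    ({-23, 23}, true), ({-23, 23}, true),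
    ({-19, -7, 7, 19}, true), ({-21, -5, 5, 21}, true), ({-21, -9, 9, 21}, true),
    ({-21, -13, 13, 21}, true), ({-23, -7, 7, 23}, true), ({-23, -9, 9, 23}, true),
    ({-23, -13, 13, 23}, true),
    ({-23, -13, -5, 5, 13, 23}, true), ({-23, -15, -3, 3, 15, 23}, true),
    ({-23, -15, -7, 7, 15, 23}, true), ({-23, -17, -5, 5, 17, 23}, true),
    ({-23, -17, -9, 9, 17, 23}, true), ({-23, -19, -3, 3, 19, 23}, true),
    ({-23, -19, -11, 11, 19, 23}, true)]

/-- The multiset `{ e + d - 1 - 2j : e ∈ E(π), 0 ≤ j ≤ d - 1 }` contributed by a pair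
`(π, d)`. -/
def contrib (i : Fin 23) (d : ℕ) : Multiset ℤ :=
  (datum i).1.bind fun e => (Multiset.range d).map fun j => e + (d : ℤ) - 1 - 2 * (j : ℤ)

/-- The multiset of the 24 odd integers of absolute value at most 23, each with
multiplicity one. -/
def targetMultiset : Multiset ℤ :=
  ((Multiset.range 12).map fun k => (2 * (k : ℤ) + 1)) +
    ((Multiset.range 12).map fun k => -(2 * (k : ℤ) + 1))

/-- A parameter: a finite set `S` of pairs `(π, d)` with `d ≥ 1` odd if `π` is symplectic and
even if `π` is orthogonal, whose total contributed multiset is `{±1, ±3, …, ±23}`. -/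
def IsParameter (S : Finset (Fin 23 × ℕ)) : Prop :=
  (∀ p ∈ S, 1 ≤ p.2 ∧ (if (datum p.1).2 then Odd p.2 else Even p.2)) ∧
    ∑ p ∈ S, contrib p.1 p.2 = targetMultiset

def remL : List ℕ → List ℕ → Option (List ℕ)
  | T, [] => some T
  | T, x :: a => match T.elem x with
    | true => remL (T.erase x) a
    | false => none

def cntL : List (List ℕ) → List ℕ → ℕ
  | [], T => match T with
    | [] => 1
    | _ :: _ => 0
  | a :: L, T => match Nat.blt (a.headD 0) (T.headD 0) with
    | true => 0
    | false => cntL L T + match remL T a with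
      | some R => cntL L R
      | none => 0

theorem remL_some : ∀ (a T R : List ℕ), remL T a = some R →
    (T : Multiset ℕ) = (a : Multiset ℕ) + (R : Multiset ℕ)
  | [], T, R, h => by simp [remL] at h; simp [h]
  | x :: a, T, R, h => by
    rw [remL] at h
    cases hx : T.elem x with
    | false => rw [hx] at h; exact absurd h (by simp)
    | true =>
      rw [hx] at h
      have h2 := remL_some a _ R h
      have hm : x ∈ (T : Multiset ℕ) := by simpa using hx
      rw [← Multiset.cons_erase hm, Multiset.coe_erase, h2, ← Multiset.cons_coe,
        Multiset.cons_add]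

theorem remL_none : ∀ (a T : List ℕ), remL T a = none →
    ¬ (a : Multiset ℕ) ≤ (T : Multiset ℕ)
  | [], T, h => by simp [remL] at h
  | x :: a, T, h => by
    intro hle
    rw [remL] at h
    have hm : x ∈ (T : Multiset ℕ) := Multiset.mem_of_le hle (by simp)
    have hx : T.elem x = true := by simpa using hm
    rw [hx] at h
    refine remL_none a _ h ?_
    rw [← Multiset.cons_coe, ← Multiset.cons_erase hm, Multiset.cons_le_cons_iff] at hle
    simpa using hle

theorem cntL_correct {α : Type*} [DecidableEq α] (F : α → Multiset ℕ) :
    ∀ (L : List (α × List ℕ)), (L.map Prod.fst).Nodup →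
      (∀ q ∈ L, F q.1 = (q.2 : Multiset ℕ)) →
      L.Pairwise (fun a b => ∀ x ∈ b.2, x ≤ a.2.headD 0) →
      (∀ q ∈ L, ∀ x ∈ q.2, x ≤ q.2.headD 0) →
      ∀ T : List ℕ, (((L.map Prod.fst).toFinset.powerset).filter
        (fun S => ∑ p ∈ S, F p = (T : Multiset ℕ))).card = cntL (L.map Prod.snd) T
  | [], _, _, _, _, T => by
    cases T with
    | nil => rfl
    | cons t T =>
      rw [Finset.card_eq_zero.2]
      · rfl
      · rw [Finset.filter_eq_empty_iff]
        intro S hS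
        simp at hS
        subst hS
        intro h
        simp at h
        have := congrArg Multiset.card h
        simp at this
  | q :: L, hnd, hF, hp, hs, T => by
    obtain ⟨a, l⟩ := q
    simp only [List.map_cons, List.nodup_cons] at hnd
    have ih := cntL_correct F L hnd.2 (fun q hq => hF q (by simp [hq]))
      (List.pairwise_cons.1 hp).2 (fun q hq => hs q (by simp [hq]))
    have hFa : F a = (l : Multiset ℕ) := hF (a, l) (by simp)
    simp only [List.map_cons, cntL]
    cases hb : Nat.blt (l.headD 0) (T.headD 0) with
    | true =>
      have hlt : l.headD 0 < T.headD 0 := by simpa [Nat.blt_eq] using hb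
      rw [Finset.card_eq_zero, Finset.filter_eq_empty_iff]
      intro S hS h
      have hmem : T.headD 0 ∈ (T : Multiset ℕ) := by
        cases T with
        | nil => simp at hlt
        | cons t T => simp
      rw [← h, Multiset.mem_sum] at hmem
      obtain ⟨p, hpS, hx⟩ := hmem
      have hpL := Finset.mem_powerset.1 hS hpS
      rw [List.mem_toFinset, ← List.map_cons (f := Prod.fst) (a := (a, l)), List.mem_map] at hpL
      obtain ⟨q, hq, rfl⟩ := hpL
      rw [hF q hq, Multiset.mem_coe] at hx
      have : T.headD 0 ≤ l.headD 0 := by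
        rcases List.mem_cons.1 hq with rfl | hq'
        · exact hs _ hq _ hx
        · exact (List.pairwise_cons.1 hp).1 q hq' _ hx
      omega
    | false =>
      have ha : a ∉ (L.map Prod.fst).toFinset := by simpa using hnd.1
      rw [List.toFinset_cons, Finset.powerset_insert, Finset.filter_union,
        Finset.card_union_of_disjoint, ih T]
      · congr 1
        rw [Finset.filter_image, Finset.card_image_of_injOn]
        · have key : ∀ S ∈ (L.map Prod.fst).toFinset.powerset,
              ∑ p ∈ insert a S, F p = (l : Multiset ℕ) + ∑ p ∈ S, F p := by
            intro S hS
            rw [Finset.sum_insert (fun h => ha (Finset.mem_powerset.1 hS h)), hFa]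
          cases hr : remL T l with
          | none =>
            rw [Finset.card_eq_zero, Finset.filter_eq_empty_iff]
            intro S hS h
            rw [key S hS] at h
            exact remL_none l T hr (h ▸ Multiset.le_add_right _ _)
          | some R =>
            simp only
            rw [← ih R]
            congr 1
            apply Finset.filter_congr
            intro S hS
            rw [key S hS, remL_some l T R hr, add_right_inj]
        · intro S hS S' hS' h
          have h1 : a ∉ S := fun h => ha (Finset.mem_powerset.1 (Finset.mem_filter.1 hS).1 h)
          have h2 : a ∉ S' := fun h => ha (Finset.mem_powerset.1 (Finset.mem_filter.1 hS').1 h)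
          rw [← Finset.erase_insert h1, ← Finset.erase_insert h2]
          rw [h]
      · rw [Finset.disjoint_left]
        intro S hS hS'
        obtain ⟨S', -, rfl⟩ := Finset.mem_image.1 (Finset.mem_filter.1 hS').1
        exact ha (Finset.mem_powerset.1 (Finset.mem_filter.1 hS).1 (by simp))

def items : List ((Fin 23 × ℕ) × List ℕ) :=
  [((0, 24), [23, 21, 19, 17, 15, 13, 11, 9, 7, 5, 3, 1]),
   ((1, 2), [23, 21, 1]),
   ((3, 9), [23, 21, 19, 17, 15, 13, 11, 9, 7]),
   ((4, 7), [23, 21, 19, 17, 15, 13, 11]),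
   ((5, 5), [23, 21, 19, 17, 15]),
   ((6, 3), [23, 21, 19]),
   ((7, 1), [23]),
   ((8, 1), [23]),
   ((9, 5), [23, 21, 19, 17, 15, 11, 9, 7, 5, 3]),
   ((10, 3), [23, 21, 19, 7, 5, 3]),
   ((11, 3), [23, 21, 19, 11, 9, 7]),
   ((12, 3), [23, 21, 19, 15, 13, 11]),
   ((13, 1), [23, 7]),
   ((14, 1), [23, 9]),
   ((15, 1), [23, 13]),
   ((16, 1), [23, 13, 5]),
   ((17, 1), [23, 15, 3]),
   ((18, 1), [23, 15, 7]),
   ((19, 1), [23, 17, 5]),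
   ((20, 1), [23, 17, 9]),
   ((21, 1), [23, 19, 3]),
   ((22, 1), [23, 19, 11]),
   ((0, 22), [21, 19, 17, 15, 13, 11, 9, 7, 5, 3, 1]),
   ((2, 11), [21, 19, 17, 15, 13, 11, 9, 7, 5, 3, 1]),
   ((3, 7), [21, 19, 17, 15, 13, 11, 9]),
   ((4, 5), [21, 19, 17, 15, 13]),
   ((5, 3), [21, 19, 17]),
   ((6, 1), [21]),
   ((9, 3), [21, 19, 17, 9, 7, 5]),
   ((10, 1), [21, 5]),
   ((11, 1), [21, 9]),
   ((12, 1), [21, 13]),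
   ((0, 20), [19, 17, 15, 13, 11, 9, 7, 5, 3, 1]),
   ((2, 9), [19, 17, 15, 13, 11, 9, 7, 5, 3]),
   ((3, 5), [19, 17, 15, 13, 11]),
   ((4, 3), [19, 17, 15]),
   ((5, 1), [19]),
   ((9, 1), [19, 7]),
   ((0, 18), [17, 15, 13, 11, 9, 7, 5, 3, 1]),
   ((2, 7), [17, 15, 13, 11, 9, 7, 5]),
   ((3, 3), [17, 15, 13]),
   ((4, 1), [17]),
   ((0, 16), [15, 13, 11, 9, 7, 5, 3, 1]),
   ((2, 5), [15, 13, 11, 9, 7]),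
   ((3, 1), [15]),
   ((0, 14), [13, 11, 9, 7, 5, 3, 1]),
   ((2, 3), [13, 11, 9]),
   ((0, 12), [11, 9, 7, 5, 3, 1]),
   ((2, 1), [11]),
   ((0, 10), [9, 7, 5, 3, 1]),
   ((0, 8), [7, 5, 3, 1]),
   ((0, 6), [5, 3, 1]),
   ((0, 4), [3, 1]),
   ((0, 2), [1])]

def posT : List ℕ := [23, 21, 19, 17, 15, 13, 11, 9, 7, 5, 3, 1]

def posHom : Multiset ℤ →+ Multiset ℕ where
  toFun M := (M.filter (fun x => 0 < x)).map Int.toNat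
  map_zero' := by simp
  map_add' M N := by rw [Multiset.filter_add, Multiset.map_add]

def symPart : Multiset ℕ →+ Multiset ℤ where
  toFun M := M.map (fun x : ℕ => (x : ℤ)) + M.map (fun x : ℕ => -(x : ℤ))
  map_zero' := by simp
  map_add' M N := by
    rw [Multiset.map_add, Multiset.map_add]
    abel

theorem items_contrib : ∀ q ∈ items, contrib q.1.1 q.1.2 = symPart (q.2 : Multiset ℕ) := by
  decide +kernel

theorem posHom_symPart : ∀ q ∈ items,
    posHom (symPart (q.2 : Multiset ℕ)) = (q.2 : Multiset ℕ) := by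
  decide +kernel

theorem posHom_target : posHom targetMultiset = (posT : Multiset ℕ) := by decide +kernel

theorem symPart_target : symPart (posT : Multiset ℕ) = targetMultiset := by decide +kernel

theorem items_complete : ∀ i : Fin 23, ∀ d ∈ List.range 25,
    ((1 ≤ d ∧ (if (datum i).2 then Odd d else Even d)) ∧ contrib i d ≤ targetMultiset) →
    (i, d) ∈ items.map Prod.fst := by
  decide +kernel

theorem items_cond : ∀ q ∈ items,
    1 ≤ q.1.2 ∧ (if (datum q.1.1).2 then Odd q.1.2 else Even q.1.2) := by
  decide +kernel

theorem datum_card : ∀ i, 1 ≤ Multiset.card (datum i).1 := by decide +kernel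

theorem target_card : Multiset.card targetMultiset = 24 := by decide +kernel

theorem contrib_card (i : Fin 23) (d : ℕ) :
    Multiset.card (contrib i d) = Multiset.card (datum i).1 * d := by
  simp [contrib, Multiset.card_bind]

theorem le_sum_multiset {α : Type*} [DecidableEq α] (f : α → Multiset ℤ) (S : Finset α) (a : α)
    (h : a ∈ S) : f a ≤ ∑ p ∈ S, f p := by
  rw [← Finset.add_sum_erase S f h]
  exact Multiset.le_add_right _ _

theorem isParameter_iff (S : Finset (Fin 23 × ℕ)) : IsParameter S ↔
    S ∈ ((items.map Prod.fst).toFinset.powerset).filter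
      (fun S => ∑ p ∈ S, posHom (contrib p.1 p.2) = (posT : Multiset ℕ)) := by
  rw [Finset.mem_filter, Finset.mem_powerset]
  constructor
  · rintro ⟨h1, h2⟩
    refine ⟨?_, ?_⟩
    · rintro ⟨i, d⟩ hp
      have hle : contrib i d ≤ targetMultiset := by
        rw [← h2]
        exact le_sum_multiset (fun p : Fin 23 × ℕ => contrib p.1 p.2) S (i, d) hp
      have hc := Multiset.card_le_card hle
      rw [contrib_card, target_card] at hc
      have hd : d < 25 := by nlinarith [datum_card i]
      rw [List.mem_toFinset]
      exact items_complete i d (List.mem_range.2 hd) ⟨h1 _ hp, hle⟩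
    · rw [← map_sum, h2, posHom_target]
  · rintro ⟨h1, h2⟩
    have hq : ∀ p ∈ S, ∃ q ∈ items, q.1 = p := by
      intro p hp
      have := h1 hp
      rwa [List.mem_toFinset, List.mem_map] at this
    refine ⟨?_, ?_⟩
    · intro p hp
      obtain ⟨q, hq, rfl⟩ := hq p hp
      exact items_cond q hq
    · rw [← symPart_target, ← h2, map_sum]
      apply Finset.sum_congr rfl
      intro p hp
      obtain ⟨q, hq, rfl⟩ := hq p hp
      rw [items_contrib q hq, posHom_symPart q hq]

theorem items_nodup : (items.map Prod.fst).Nodup := by decide +kernel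

theorem items_sorted : items.Pairwise (fun a b => ∀ x ∈ b.2, x ≤ a.2.headD 0) := by
  decide +kernel

theorem items_self : ∀ q ∈ items, ∀ x ∈ q.2, x ≤ q.2.headD 0 := by decide +kernel

theorem cnt_eq : cntL (items.map Prod.snd) posT = 121 := by decide +kernel

/-- There are exactly `121` parameters. -/
theorem statement9 : Nat.card {S : Finset (Fin 23 × ℕ) // IsParameter S} = 121 := by
  rw [← cnt_eq, ← cntL_correct (fun p => posHom (contrib p.1 p.2)) items items_nodup
    (fun q hq => by rw [items_contrib q hq, posHom_symPart q hq]) items_sorted items_self posT]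
  rw [← Nat.card_eq_finsetCard]
  exact Nat.card_congr (Equiv.subtypeEquivRight isParameter_iff)
end
end
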